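/- Let f be holomorphic on 𝔻 and z ∈ 𝔻. Then Γ(f)(z) = 0 if and only if one of the following occurs: (i) there exists z′ ∈ 𝔻 with z′ ≠ z such that B(z′) = B(z) and f(z′) = f(z); or (ii) B′(z) = 0 and f′(z) = 0. -/

import Mathlib

/-!
Write `B = N / D` with `N = ∏ (a_j - X)` and `D = ∏ (1 - conj(a_j) X)`. The fiber over `B(z)` is the
root multiset of `P_z = N - B(z) D`. Since `a_1 = 0`, `deg D < deg N = n`, so `P_z` has exactly `n`
roots and leading coefficient `(-1)^n`, independent of `z`; since `‖D‖ ≤ ‖N‖` outside the disk while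
`‖B(z)‖ < 1`, all the roots lie in the disk. Moreover `z` is a multiple root of `P_z` if and only if
the Wronskian of `N` and `D` vanishes at `z`, if and only if `B'(z) = 0`
(`mem_erase_fiber_self_iff`, `deriv_blaschke_eq_zero_iff`). This Wronskian is a nonzero polynomial,
because `N` and `D` are coprime and `N` is not constant.

The core is the product formula (`exists_fiber_prod_formula`): if `v_1, …, v_{n-1}` is the fiber
over `B(z)` with one copy of `z` removed, then
`G(z) = ∏ q_i`, where `q_i = (f(z) - f(v_i)) / (z - v_i)` if `v_i ≠ z` and `q_i = f'(z)` if
`v_i = z`. It is obtained by approaching `z` along points `ζ_k` at which the Wronskian does not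
vanish. There `G(ζ_k)` is literally the product of difference quotients. The remaining roots at
`ζ_k` form a bounded sequence in `ℂ^{n-1}`, hence converge along a subsequence, and comparing
`P_{ζ_k}` with its factorization in the limit shows that the limits are the fiber over `B(z)`.
The difference quotients converge by strict differentiability of `f` (`tendsto_quotient`).
The theorem is then a reading of the vanishing of the product factor by factor.
-/

open Complex Polynomial MeasureTheory Metric Set Filter Topology
open scoped Classical

noncomputable section

/-- The open unit disk in `ℂ`. -/
def uDisk : Set ℂ := Metric.ball 0 1

/-- The closed unit disk in `ℂ`. -/
def cDisk : Set ℂ := Metric.closedBall 0 1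

/-- The finite Blaschke product with zero set `a 0, …, a (n-1)`:
`B(z) = ∏_j (a_j - z)/(1 - conj(a_j)·z)`. -/
def blaschke {n : ℕ} (a : Fin n → ℂ) (z : ℂ) : ℂ :=
  ∏ j, (a j - z) / (1 - (starRingEnd ℂ) (a j) * z)

/-- The multiset of the `n` solutions (with multiplicity) `φ_0(z) = z, φ_1(z), …, φ_{n-1}(z)`
of `B(w) = B(z)`, realized as the roots of the polynomial equation
`∏_j (a_j - w) = B(z) · ∏_j (1 - conj(a_j)·w)`. -/
def fiberMS {n : ℕ} (a : Fin n → ℂ) (z : ℂ) : Multiset ℂ :=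
  ((∏ j, (Polynomial.C (a j) - Polynomial.X)) -
    Polynomial.C (blaschke a z) *
      ∏ j, (1 - Polynomial.C ((starRingEnd ℂ) (a j)) * Polynomial.X)).roots

/-- `𝒟(f)(z) = ∏_{j=1}^{n-1} (f(z) - f(φ_j(z)))`, where `φ_1(z), …, φ_{n-1}(z)` is the
fiber of `B` over `B(z)` with one copy of `z` removed.  In particular
`calD a id z = ∏_{j=1}^{n-1} (z - φ_j(z))`. -/
def calD {n : ℕ} (a : Fin n → ℂ) (f : ℂ → ℂ) (z : ℂ) : ℂ :=
  (((fiberMS a z).erase z).map (fun w => f z - f w)).prod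

/-- `G` is (the holomorphic extension after removing singularities of) `Γ(f) = 𝒟(f)/𝒟`. -/
def IsGamma {n : ℕ} (a : Fin n → ℂ) (f G : ℂ → ℂ) : Prop :=
  DifferentiableOn ℂ G uDisk ∧ ∀ z ∈ uDisk, G z * calD a id z = calD a f z

/-- `p`-th power integral mean of `f` on the circle of radius `r`. -/
def circMean (p : ℝ) (f : ℂ → ℂ) (r : ℝ) : ℝ :=
  ∫ θ in (0:ℝ)..(2 * Real.pi), ‖f ((r : ℂ) * Complex.exp ((θ : ℂ) * Complex.I))‖ ^ p

/-- The `H^p` norm of `f` (for `0 < p < ∞`). -/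
def hpNorm (p : ℝ) (f : ℂ → ℂ) : ℝ :=
  (sSup {m : ℝ | ∃ r ∈ Set.Ico (0:ℝ) 1, m = circMean p f r}) ^ (1 / p)

/-- Membership in the Hardy space `H^p`, `0 < p < ∞`: holomorphic on the disk with
uniformly bounded integral means. -/
def MemHp (p : ℝ) (f : ℂ → ℂ) : Prop :=
  DifferentiableOn ℂ f uDisk ∧ ∃ C : ℝ, ∀ r ∈ Set.Ico (0:ℝ) 1, circMean p f r ≤ C

/-- Membership in `H^∞`: bounded holomorphic functions on the disk. -/
def MemHinf (f : ℂ → ℂ) : Prop :=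
  DifferentiableOn ℂ f uDisk ∧ ∃ C : ℝ, ∀ z ∈ uDisk, ‖f z‖ ≤ C

/-- The `H^∞` (sup) norm. -/
def hinfNorm (f : ℂ → ℂ) : ℝ := sSup {m : ℝ | ∃ z ∈ uDisk, m = ‖f z‖}

/-- The algebra of all polynomials in the functions `F 0, …, F (m-1)`. -/
def algGen (m : ℕ) (F : Fin m → (ℂ → ℂ)) : Set (ℂ → ℂ) :=
  {h | ∃ P : MvPolynomial (Fin m) ℂ, ∀ z : ℂ, h z = MvPolynomial.eval (fun i => F i z) P}

/-- The algebra `ℂ[F,G]` of all polynomials in the two functions `F` and `G`. -/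
def algGen2 (F G : ℂ → ℂ) : Set (ℂ → ℂ) := algGen 2 ![F, G]

/-- The (sequential) closure of `S` in `H^p`. -/
def hpClosure (p : ℝ) (S : Set (ℂ → ℂ)) : Set (ℂ → ℂ) :=
  {f | MemHp p f ∧ ∃ u : ℕ → (ℂ → ℂ), (∀ k, u k ∈ S) ∧
    Filter.Tendsto (fun k => hpNorm p (fun z => f z - u k z)) Filter.atTop (nhds 0)}

/-- `S` has finite codimension in `H^p`: finitely many functions in `H^p` together with `S`
span all of `H^p`. -/
def FiniteCodimHp (p : ℝ) (S : Set (ℂ → ℂ)) : Prop :=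
  ∃ (k : ℕ) (e : Fin k → (ℂ → ℂ)), (∀ i, MemHp p (e i)) ∧
    ∀ f, MemHp p f → ∃ (c : Fin k → ℂ) (s : ℂ → ℂ), s ∈ S ∧
      ∀ z ∈ uDisk, f z = s z + ∑ i, c i * e i z

/-- Inner function: bounded by 1, holomorphic, radial limits of modulus 1 a.e. -/
def IsInner (f : ℂ → ℂ) : Prop :=
  DifferentiableOn ℂ f uDisk ∧ (∀ z ∈ uDisk, ‖f z‖ ≤ 1) ∧
  ∀ᵐ θ : ℝ ∂volume, ∃ l : ℂ, ‖l‖ = 1 ∧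
    Filter.Tendsto (fun r : ℝ => f ((r : ℂ) * Complex.exp ((θ : ℂ) * Complex.I)))
      (nhdsWithin 1 (Set.Iio 1)) (nhds l)

/-- `J` divides `h`, with a quotient holomorphic on the disk. -/
def InnerDivides (J h : ℂ → ℂ) : Prop :=
  ∃ k : ℂ → ℂ, DifferentiableOn ℂ k uDisk ∧ ∀ z ∈ uDisk, h z = J z * k z

/-- Outer function: a holomorphic function on the disk whose only inner divisors are
unimodular constants (i.e. whose inner part is a unimodular constant). -/
def IsOuter (h : ℂ → ℂ) : Prop :=
  DifferentiableOn ℂ h uDisk ∧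
  ∀ J : ℂ → ℂ, IsInner J → InnerDivides J h →
    ∃ c : ℂ, ‖c‖ = 1 ∧ ∀ z ∈ uDisk, J z = c

/-- `I` is the inner part of `h`: `I` is inner and `h = I·F` with `F` outer. -/
def IsInnerPartOf (I h : ℂ → ℂ) : Prop :=
  IsInner I ∧ ∃ F : ℂ → ℂ, IsOuter F ∧ ∀ z ∈ uDisk, h z = I z * F z

/-- Finite Blaschke product (up to a unimodular constant factor). -/
def IsFiniteBlaschke (f : ℂ → ℂ) : Prop :=
  ∃ (m : ℕ) (c : ℂ) (b : Fin m → ℂ), ‖c‖ = 1 ∧ (∀ i, b i ∈ uDisk) ∧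
    ∀ z ∈ uDisk, f z = c * ∏ i, (b i - z) / (1 - (starRingEnd ℂ) (b i) * z)

/-- `h` has no singular inner factor: every zero-free inner divisor of `h` is a
unimodular constant. -/
def NoSingularInnerFactor (h : ℂ → ℂ) : Prop :=
  ∀ J : ℂ → ℂ, IsInner J → (∀ z ∈ uDisk, J z ≠ 0) → InnerDivides J h →
    ∃ c : ℂ, ‖c‖ = 1 ∧ ∀ z ∈ uDisk, J z = c

/-! ### Numerator and denominator of a Blaschke product -/

/-- The numerator `N = ∏ (a_j - X)` of the Blaschke product. -/
def numP {n : ℕ} (a : Fin n → ℂ) : ℂ[X] := ∏ j, (C (a j) - X)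

/-- The denominator `D = ∏ (1 - conj(a_j) X)` of the Blaschke product. -/
def denP {n : ℕ} (a : Fin n → ℂ) : ℂ[X] := ∏ j, (1 - C ((starRingEnd ℂ) (a j)) * X)

/-- The polynomial `P_z = N - B(z) D` whose roots are the fiber of `B` over `B(z)`. -/
def fiberP {n : ℕ} (a : Fin n → ℂ) (z : ℂ) : ℂ[X] := numP a - C (blaschke a z) * denP a

lemma fiberMS_eq {n : ℕ} (a : Fin n → ℂ) (z : ℂ) : fiberMS a z = (fiberP a z).roots := rfl

lemma mem_uDisk {z : ℂ} : z ∈ uDisk ↔ ‖z‖ < 1 := by simp [uDisk]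

lemma isOpen_uDisk : IsOpen uDisk := Metric.isOpen_ball

lemma eval_numP {n : ℕ} (a : Fin n → ℂ) (w : ℂ) : (numP a).eval w = ∏ j, (a j - w) := by
  simp [numP, eval_prod]

lemma eval_denP {n : ℕ} (a : Fin n → ℂ) (w : ℂ) :
    (denP a).eval w = ∏ j, (1 - (starRingEnd ℂ) (a j) * w) := by
  simp [denP, eval_prod]

lemma blaschke_eq {n : ℕ} (a : Fin n → ℂ) (w : ℂ) :
    blaschke a w = (numP a).eval w / (denP a).eval w := by
  rw [eval_numP, eval_denP, blaschke, Finset.prod_div_distrib]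

lemma one_sub_conj_mul_ne_zero {b w : ℂ} (hb : ‖b‖ < 1) (hw : ‖w‖ < 1) :
    1 - (starRingEnd ℂ) b * w ≠ 0 := by
  intro h
  have h1 : ‖(starRingEnd ℂ) b * w‖ = 1 := by rw [← sub_eq_zero.1 h, norm_one]
  rw [norm_mul, RCLike.norm_conj] at h1
  nlinarith [norm_nonneg b, norm_nonneg w]

lemma eval_denP_ne_zero {n : ℕ} {a : Fin n → ℂ} (ha : ∀ j, a j ∈ uDisk) {w : ℂ}
    (hw : w ∈ uDisk) : (denP a).eval w ≠ 0 := by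
  rw [eval_denP]
  exact Finset.prod_ne_zero_iff.2 fun j _ =>
    one_sub_conj_mul_ne_zero (mem_uDisk.1 (ha j)) (mem_uDisk.1 hw)

/-- The identity behind the fact that a Blaschke factor maps the disk, the circle and the exterior
each to itself. -/
lemma norm_sq_sub_norm_sq (b w : ℂ) :
    ‖1 - (starRingEnd ℂ) b * w‖ ^ 2 - ‖b - w‖ ^ 2 = (1 - ‖b‖ ^ 2) * (1 - ‖w‖ ^ 2) := by
  simp only [← Complex.normSq_eq_norm_sq, Complex.normSq_apply]
  simp
  ring

lemma norm_blaschke_lt_one {n : ℕ} (hn : 2 ≤ n) {a : Fin n → ℂ} (ha : ∀ j, a j ∈ uDisk) {w : ℂ}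
    (hw : w ∈ uDisk) : ‖blaschke a w‖ < 1 := by
  rw [blaschke, norm_prod]
  have key : ∀ j, ‖(a j - w) / (1 - (starRingEnd ℂ) (a j) * w)‖ < 1 := by
    intro j
    have h1 := mem_uDisk.1 (ha j)
    have h2 := mem_uDisk.1 hw
    have h3 := norm_sq_sub_norm_sq (a j) w
    rw [norm_div, div_lt_one (norm_pos_iff.2 (one_sub_conj_mul_ne_zero h1 h2))]
    refine lt_of_pow_lt_pow_left₀ 2 (norm_nonneg _) ?_
    have : 0 < (1 - ‖a j‖ ^ 2) * (1 - ‖w‖ ^ 2) := by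
      apply mul_pos <;> nlinarith [norm_nonneg w, norm_nonneg (a j)]
    linarith
  let j0 : Fin n := ⟨0, two_pos.trans_le hn⟩
  rw [← Finset.mul_prod_erase _ _ (Finset.mem_univ j0)]
  refine mul_lt_one_of_nonneg_of_lt_one_left (norm_nonneg _) (key j0) ?_
  exact Finset.prod_le_one (fun _ _ => norm_nonneg _) fun j _ => (key j).le

lemma norm_denP_le_norm_numP {n : ℕ} {a : Fin n → ℂ} (ha : ∀ j, a j ∈ uDisk) {w : ℂ}
    (hw : 1 ≤ ‖w‖) : ‖(denP a).eval w‖ ≤ ‖(numP a).eval w‖ := by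
  rw [eval_numP, eval_denP, norm_prod, norm_prod]
  refine Finset.prod_le_prod (fun _ _ => norm_nonneg _) fun j _ => ?_
  have h1 := mem_uDisk.1 (ha j)
  have h3 := norm_sq_sub_norm_sq (a j) w
  refine le_of_sq_le_sq ?_ (norm_nonneg _)
  have : 0 ≤ (1 - ‖a j‖ ^ 2) * (‖w‖ ^ 2 - 1) := by
    apply mul_nonneg <;> nlinarith [norm_nonneg w, norm_nonneg (a j)]
  linarith

lemma numP_eval_ne_zero {n : ℕ} {a : Fin n → ℂ} (ha : ∀ j, a j ∈ uDisk) {w : ℂ}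
    (hw : 1 ≤ ‖w‖) : (numP a).eval w ≠ 0 := by
  rw [eval_numP]
  refine Finset.prod_ne_zero_iff.2 fun j _ h => ?_
  rw [← sub_eq_zero.1 h] at hw
  linarith [mem_uDisk.1 (ha j)]

/-- `N` and `D` have no common root: the roots of `N` lie in the disk, where `D` does not vanish. -/
lemma isCoprime_numP_denP {n : ℕ} {a : Fin n → ℂ} (ha : ∀ j, a j ∈ uDisk) :
    IsCoprime (numP a) (denP a) := by
  refine IsCoprime.prod_left fun i _ => ?_
  have h : IsCoprime (X - C (a i)) (denP a) := by
    refine ((Polynomial.irreducible_X_sub_C (a i)).coprime_iff_not_dvd).2 ?_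
    rw [Polynomial.dvd_iff_isRoot]
    exact eval_denP_ne_zero ha (ha i)
  rw [← neg_sub]
  exact h.neg_left

/-! ### The fiber polynomial -/

lemma natDegree_numP {n : ℕ} (a : Fin n → ℂ) : (numP a).natDegree = n := by
  have h : ∀ j, (C (a j) - X : ℂ[X]).natDegree = 1 := fun j => by
    rw [← neg_sub, natDegree_neg, natDegree_X_sub_C]
  have h0 : ∀ j, (C (a j) - X : ℂ[X]) ≠ 0 := fun j h' => by
    have := h j
    simp [h'] at this
  rw [numP, natDegree_prod _ _ fun j _ => h0 j]
  simp [h]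

lemma leadingCoeff_numP {n : ℕ} (a : Fin n → ℂ) : (numP a).leadingCoeff = (-1) ^ n := by
  have h : ∀ j, (C (a j) - X : ℂ[X]).leadingCoeff = -1 := fun j => by
    rw [← neg_sub, leadingCoeff_neg, leadingCoeff_X_sub_C]
  rw [numP, leadingCoeff_prod]
  simp [h]

/-- The factor of `D` belonging to a zero `a_j = 0` is constant. -/
lemma natDegree_denP_lt {n : ℕ} {a : Fin n → ℂ} (ha0 : ∃ j, a j = 0) :
    (denP a).natDegree < n := by
  obtain ⟨j0, hj0⟩ := ha0
  refine (natDegree_prod_le _ _).trans_lt ?_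
  have h1 : ∑ _j : Fin n, 1 = n := by simp
  conv_rhs => rw [← h1]
  refine Finset.sum_lt_sum (fun j _ => ?_) ⟨j0, Finset.mem_univ _, ?_⟩
  · refine (natDegree_sub_le _ _).trans (max_le (by simp) ?_)
    exact (natDegree_C_mul_le _ _).trans natDegree_X_le
  · simp [hj0]

lemma degree_lt_aux {n : ℕ} {a : Fin n → ℂ} (ha0 : ∃ j, a j = 0) (z : ℂ) :
    (C (blaschke a z) * denP a).degree < (numP a).degree := by
  apply degree_lt_degree
  rw [natDegree_numP]
  exact (natDegree_C_mul_le _ _).trans_lt (natDegree_denP_lt ha0)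

lemma natDegree_fiberP {n : ℕ} {a : Fin n → ℂ} (ha0 : ∃ j, a j = 0) (z : ℂ) :
    (fiberP a z).natDegree = n := by
  rw [fiberP, natDegree_eq_of_degree_eq (degree_sub_eq_left_of_degree_lt (degree_lt_aux ha0 z)),
    natDegree_numP]

lemma leadingCoeff_fiberP {n : ℕ} {a : Fin n → ℂ} (ha0 : ∃ j, a j = 0)
    (z : ℂ) : (fiberP a z).leadingCoeff = (-1) ^ n := by
  rw [fiberP, leadingCoeff_sub_of_degree_lt (degree_lt_aux ha0 z), leadingCoeff_numP]

lemma fiberP_ne_zero {n : ℕ} (hn : 2 ≤ n) {a : Fin n → ℂ} (ha0 : ∃ j, a j = 0) (z : ℂ) :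
    fiberP a z ≠ 0 := by
  intro h
  have := natDegree_fiberP ha0 z
  rw [h, natDegree_zero] at this
  omega

lemma card_fiberMS {n : ℕ} {a : Fin n → ℂ} (ha0 : ∃ j, a j = 0) (z : ℂ) :
    (fiberMS a z).card = n := by
  rw [fiberMS_eq, IsAlgClosed.card_roots_eq_natDegree, natDegree_fiberP ha0]

lemma fiberP_eq_prod {n : ℕ} {a : Fin n → ℂ} (ha0 : ∃ j, a j = 0) (z : ℂ) :
    fiberP a z = C ((-1) ^ n) * ((fiberMS a z).map fun w => X - C w).prod := by
  rw [fiberMS_eq, ← leadingCoeff_fiberP ha0 z,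
    C_leadingCoeff_mul_prod_multiset_X_sub_C IsAlgClosed.card_roots_eq_natDegree]

/-- The fiber multiset consists of the solutions of `B(w) = B(z)` in the disk. -/
lemma mem_fiberMS {n : ℕ} (hn : 2 ≤ n) {a : Fin n → ℂ} (ha : ∀ j, a j ∈ uDisk)
    (ha0 : ∃ j, a j = 0) {z : ℂ} (hz : z ∈ uDisk) {w : ℂ} :
    w ∈ fiberMS a z ↔ w ∈ uDisk ∧ blaschke a w = blaschke a z := by
  rw [fiberMS_eq, mem_roots (fiberP_ne_zero hn ha0 z), IsRoot.def, fiberP, eval_sub, eval_mul,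
    eval_C, sub_eq_zero]
  constructor
  · intro h
    have hw : w ∈ uDisk := by
      rw [mem_uDisk]
      by_contra! hw
      have h1 := norm_denP_le_norm_numP ha hw
      have h2 := norm_blaschke_lt_one hn ha hz
      have h3 := norm_pos_iff.2 (numP_eval_ne_zero ha hw)
      have h4 := congrArg norm h
      rw [norm_mul] at h4
      nlinarith [norm_nonneg (blaschke a z), norm_nonneg ((denP a).eval w)]
    refine ⟨hw, ?_⟩
    rw [blaschke_eq a w, h, mul_div_cancel_right₀ _ (eval_denP_ne_zero ha hw)]
  · rintro ⟨hw, h⟩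
    rw [← h, blaschke_eq a w, div_mul_cancel₀ _ (eval_denP_ne_zero ha hw)]

lemma self_mem_fiberMS {n : ℕ} (hn : 2 ≤ n) {a : Fin n → ℂ} (ha : ∀ j, a j ∈ uDisk)
    (ha0 : ∃ j, a j = 0) {z : ℂ} (hz : z ∈ uDisk) : z ∈ fiberMS a z :=
  (mem_fiberMS hn ha ha0 hz).2 ⟨hz, rfl⟩

/-! ### Critical points -/

/-- `z` is a multiple point of its fiber exactly at the zeros of the Wronskian of `N` and `D`. -/
lemma mem_erase_fiber_self_iff {n : ℕ} (hn : 2 ≤ n) {a : Fin n → ℂ} (ha : ∀ j, a j ∈ uDisk)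
    (ha0 : ∃ j, a j = 0) {z : ℂ} (hz : z ∈ uDisk) :
    z ∈ (fiberMS a z).erase z ↔ (wronskian (numP a) (denP a)).eval z = 0 := by
  have hroot : (fiberP a z).IsRoot z := by
    have := self_mem_fiberMS hn ha ha0 hz
    rwa [fiberMS_eq, mem_roots (fiberP_ne_zero hn ha0 z)] at this
  have hD := eval_denP_ne_zero ha hz
  rw [← Multiset.count_pos, Multiset.count_erase_self, fiberMS_eq, count_roots, Nat.sub_pos_iff_lt,
    one_lt_rootMultiplicity_iff_isRoot (fiberP_ne_zero hn ha0 z), and_iff_right hroot, IsRoot.def]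
  simp only [fiberP, wronskian, derivative_sub, derivative_mul, derivative_C, zero_mul, zero_add,
    eval_sub, eval_mul, eval_C]
  rw [blaschke_eq]
  field_simp
  rw [mul_zero]
  constructor <;> intro h <;> linear_combination -h

lemma deriv_blaschke_eq_zero_iff {n : ℕ} {a : Fin n → ℂ} (ha : ∀ j, a j ∈ uDisk)
    {z : ℂ} (hz : z ∈ uDisk) :
    deriv (blaschke a) z = 0 ↔ (wronskian (numP a) (denP a)).eval z = 0 := by
  have hD := eval_denP_ne_zero ha hz
  have h := ((numP a).hasDerivAt z).div ((denP a).hasDerivAt z) hD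
  have he : blaschke a = (fun w => (numP a).eval w) / (fun w => (denP a).eval w) :=
    funext fun w => blaschke_eq a w
  rw [he, h.deriv, div_eq_zero_iff, or_iff_left (pow_ne_zero 2 hD), wronskian, eval_sub, eval_mul,
    eval_mul]
  constructor <;> intro h <;> linear_combination -h

lemma wronskian_ne_zero {n : ℕ} (hn : 2 ≤ n) {a : Fin n → ℂ} (ha : ∀ j, a j ∈ uDisk) :
    wronskian (numP a) (denP a) ≠ 0 := by
  intro h
  have h1 := ((isCoprime_numP_denP ha).wronskian_eq_zero_iff.1 h).1
  have h2 := derivative_eq_zero.1 h1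
  rw [natDegree_numP] at h2
  omega

lemma continuousAt_blaschke {n : ℕ} {a : Fin n → ℂ} (ha : ∀ j, a j ∈ uDisk)
    {z : ℂ} (hz : z ∈ uDisk) : ContinuousAt (blaschke a) z := by
  have he : blaschke a = fun w => (numP a).eval w / (denP a).eval w :=
    funext fun w => blaschke_eq a w
  rw [he]
  exact (numP a).continuous.continuousAt.div (denP a).continuous.continuousAt
    (eval_denP_ne_zero ha hz)

/-! ### The product formula for `Γ(f)` -/

lemma exists_fin_map_eq {m : ℕ} (s : Multiset ℂ) (hs : s.card = m) :
    ∃ v : Fin m → ℂ, (Finset.univ : Finset (Fin m)).val.map v = s := by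
  subst hs
  induction s using Quotient.inductionOn with
  | h l =>
    refine ⟨fun i => l.get i, ?_⟩
    rw [Fin.univ_val_map]
    exact congrArg _ (List.ofFn_get l)

/-- Difference quotients along two sequences with `x_k ≠ y_k`; when the limits coincide, they
converge to the derivative by strict differentiability. -/
lemma tendsto_quotient {f : ℂ → ℂ} (hf : DifferentiableOn ℂ f uDisk) {x y : ℕ → ℂ} {z w : ℂ}
    (hz : z ∈ uDisk) (hw : w ∈ uDisk) (hx : Tendsto x atTop (𝓝 z)) (hy : Tendsto y atTop (𝓝 w))
    (hne : ∀ k, x k ≠ y k) :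
    Tendsto (fun k => (f (x k) - f (y k)) / (x k - y k)) atTop
      (𝓝 (if w = z then deriv f z else (f z - f w) / (z - w))) := by
  have hfc : ∀ u ∈ uDisk, ContinuousAt f u := fun u hu =>
    (hf.differentiableAt (isOpen_uDisk.mem_nhds hu)).continuousAt
  split_ifs with h
  · subst h
    have hs : HasStrictDerivAt f (deriv f w) w :=
      (hf.analyticAt (isOpen_uDisk.mem_nhds hz)).hasStrictDerivAt
    have h1 := hs.isLittleO.comp_tendsto (hx.prodMk_nhds hy)
    have h2 := h1.tendsto_div_nhds_zero
    have h3 := h2.add_const (deriv f w)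
    rw [zero_add] at h3
    refine h3.congr fun k => ?_
    have := sub_ne_zero.2 (hne k)
    simp
    field_simp
    ring
  · exact (((hfc z hz).tendsto.comp hx).sub ((hfc w hw).tendsto.comp hy)).div (hx.sub hy)
      (sub_ne_zero.2 (Ne.symm h))

lemma exists_seq_regular {n : ℕ} (hn : 2 ≤ n) {a : Fin n → ℂ} (ha : ∀ j, a j ∈ uDisk)
    {z : ℂ} (hz : z ∈ uDisk) :
    ∃ ζ : ℕ → ℂ, Tendsto ζ atTop (𝓝 z) ∧ ∀ k, ζ k ∈ uDisk ∧
      (wronskian (numP a) (denP a)).eval (ζ k) ≠ 0 := by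
  have hfin := finite_setOfPred_isRoot (wronskian_ne_zero hn ha)
  have h1 : ∀ᶠ w in 𝓝[≠] z, w ∈ uDisk ∧ (wronskian (numP a) (denP a)).eval w ≠ 0 := by
    have h2 := (hfin.subset (Set.sdiff_subset (t := {z}))).isClosed.compl_mem_nhds
      (x := z) (by simp)
    filter_upwards [nhdsWithin_le_nhds h2, nhdsWithin_le_nhds (isOpen_uDisk.mem_nhds hz),
      self_mem_nhdsWithin] with w hw1 hw2 hw3
    exact ⟨hw2, fun h => hw1 ⟨h, hw3⟩⟩
  obtain ⟨ζ, hζ, hζ'⟩ := exists_seq_forall_of_frequently h1.frequently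
  exact ⟨ζ, hζ.mono_right nhdsWithin_le_nhds, hζ'⟩

/-- The value `Γ(f)(z)` is the product, over the fiber of `z` with one copy of `z` removed, of the
difference quotients of `f`, read as `f'(z)` at further copies of `z`. -/
lemma exists_fiber_prod_formula {n : ℕ} (hn : 2 ≤ n) {a : Fin n → ℂ} (ha : ∀ j, a j ∈ uDisk)
    (ha0 : ∃ j, a j = 0) {f G : ℂ → ℂ} (hf : DifferentiableOn ℂ f uDisk)
    (hG : IsGamma a f G) {z : ℂ} (hz : z ∈ uDisk) :
    ∃ v : Fin (n - 1) → ℂ,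
      (Finset.univ : Finset (Fin (n - 1))).val.map v = (fiberMS a z).erase z ∧
      G z = ∏ i, if v i = z then deriv f z else (f z - f (v i)) / (z - v i) := by
  obtain ⟨ζ₀, hζ₀, hreg₀⟩ := exists_seq_regular hn ha hz
  have hcard : ∀ k, ((fiberMS a (ζ₀ k)).erase (ζ₀ k)).card = n - 1 := fun k => by
    rw [Multiset.card_erase_of_mem (self_mem_fiberMS hn ha ha0 (hreg₀ k).1),
      card_fiberMS ha0, Nat.pred_eq_sub_one]
  choose u₀ hu₀ using fun k => exists_fin_map_eq _ (hcard k)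
  have hmem₀ : ∀ k i, u₀ k i ∈ (fiberMS a (ζ₀ k)).erase (ζ₀ k) := fun k i => by
    rw [← hu₀ k]
    exact Multiset.mem_map_of_mem _ (Finset.mem_univ i)
  have hdisk : ∀ k i, u₀ k i ∈ uDisk := fun k i =>
    ((mem_fiberMS hn ha ha0 (hreg₀ k).1).1 (Multiset.mem_of_mem_erase (hmem₀ k i))).1
  have hcompact : IsCompact (Set.univ.pi fun _ : Fin (n - 1) => Metric.closedBall (0 : ℂ) 1) :=
    isCompact_univ_pi fun _ => isCompact_closedBall _ _
  obtain ⟨v, -, φ, hφ, hv⟩ := hcompact.tendsto_subseq (x := u₀)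
    fun k i _ => Metric.ball_subset_closedBall (hdisk k i)
  set ζ : ℕ → ℂ := ζ₀ ∘ φ with hζdef
  set u : ℕ → Fin (n - 1) → ℂ := u₀ ∘ φ with hudef
  have hζ : Tendsto ζ atTop (𝓝 z) := hζ₀.comp hφ.tendsto_atTop
  have hreg : ∀ k, ζ k ∈ uDisk ∧ (wronskian (numP a) (denP a)).eval (ζ k) ≠ 0 :=
    fun k => hreg₀ (φ k)
  have hu : ∀ k, (Finset.univ : Finset (Fin (n - 1))).val.map (u k) =
      (fiberMS a (ζ k)).erase (ζ k) := fun k => hu₀ (φ k)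
  have hmem : ∀ k i, u k i ∈ (fiberMS a (ζ k)).erase (ζ k) := fun k => hmem₀ (φ k)
  have hvi : ∀ i, Tendsto (fun k => u k i) atTop (𝓝 (v i)) := fun i => (tendsto_pi_nhds.1 hv) i
  have hcons : ∀ k, fiberMS a (ζ k) =
      ζ k ::ₘ (Finset.univ : Finset (Fin (n - 1))).val.map (u k) := fun k => by
    rw [hu k, Multiset.cons_erase (self_mem_fiberMS hn ha ha0 (hreg k).1)]
  -- The factorization of the fiber polynomial passes to the limit pointwise.
  have hpoly : fiberP a z = C ((-1) ^ n) *
      ((z ::ₘ (Finset.univ : Finset (Fin (n - 1))).val.map v).map fun w => X - C w).prod := by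
    refine Polynomial.funext fun x => ?_
    have h1 : Tendsto (fun k => (fiberP a (ζ k)).eval x) atTop (𝓝 ((fiberP a z).eval x)) := by
      simp only [fiberP, eval_sub, eval_mul, eval_C]
      exact tendsto_const_nhds.sub
        (((continuousAt_blaschke ha hz).tendsto.comp hζ).mul_const _)
    have heval : ∀ (b : ℂ) (w : Fin (n - 1) → ℂ), (C ((-1) ^ n) *
        ((b ::ₘ (Finset.univ : Finset (Fin (n - 1))).val.map w).map
          fun w => X - C w).prod : ℂ[X]).eval x = (-1) ^ n * ((x - b) * ∏ i, (x - w i)) := by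
      intro b w
      rw [Multiset.map_cons, Multiset.prod_cons, Multiset.map_map]
      change eval x (C ((-1) ^ n) * ((X - C b) * ∏ i, (X - C (w i)))) = _
      simp [eval_prod]
    have h2 : Tendsto (fun k => (fiberP a (ζ k)).eval x) atTop
        (𝓝 ((-1) ^ n * ((x - z) * ∏ i, (x - v i)))) := by
      have h3 : ∀ k, (fiberP a (ζ k)).eval x =
          (-1) ^ n * ((x - ζ k) * ∏ i, (x - u k i)) := fun k => by
        rw [fiberP_eq_prod ha0, hcons k, heval]
      simp only [h3]
      exact ((hζ.const_sub x).mul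
        (tendsto_finsetProd _ fun i _ => (hvi i).const_sub x)).const_mul _
    rw [heval]
    exact tendsto_nhds_unique h1 h2
  have hfib : fiberMS a z = z ::ₘ (Finset.univ : Finset (Fin (n - 1))).val.map v := by
    rw [fiberMS_eq, hpoly, roots_C_mul _ (pow_ne_zero _ (neg_ne_zero.2 one_ne_zero)),
      roots_multiset_prod_X_sub_C]
  refine ⟨v, by rw [hfib, Multiset.erase_cons_head], ?_⟩
  have hvdisk : ∀ i, v i ∈ uDisk := fun i => by
    refine ((mem_fiberMS hn ha ha0 hz).1 ?_).1
    rw [hfib]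
    exact Multiset.mem_cons_of_mem (Multiset.mem_map_of_mem _ (Finset.mem_univ i))
  have hne : ∀ i k, ζ k ≠ u k i := fun i k h => by
    refine (hreg k).2 ((mem_erase_fiber_self_iff hn ha ha0 (hreg k).1).1 ?_)
    have := hmem k i
    rwa [← h] at this
  have hGζ : ∀ k, ∏ i, (f (ζ k) - f (u k i)) / (ζ k - u k i) = G (ζ k) := fun k => by
    have h := hG.2 (ζ k) (hreg k).1
    rw [calD, calD, ← hu k, Multiset.map_map, Multiset.map_map] at h
    change G (ζ k) * ∏ i, (ζ k - u k i) = ∏ i, (f (ζ k) - f (u k i)) at h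
    rw [Finset.prod_div_distrib, ← h, mul_div_cancel_right₀]
    exact Finset.prod_ne_zero_iff.2 fun i _ => sub_ne_zero.2 (hne i k)
  have hlim1 : Tendsto (fun k => G (ζ k)) atTop (𝓝 (G z)) :=
    ((hG.1.differentiableAt (isOpen_uDisk.mem_nhds hz)).continuousAt.tendsto).comp hζ
  have hlim2 := tendsto_finsetProd Finset.univ fun i _ =>
    tendsto_quotient hf hz (hvdisk i) hζ (hvi i) (hne i)
  simp only [hGζ] at hlim2
  exact tendsto_nhds_unique hlim1 hlim2

/-- For `f` holomorphic on the disk and `z ∈ 𝔻`, `Γ(f)(z) = 0` if and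
only if either there is `z' ≠ z` in the disk with `B(z') = B(z)` and `f(z') = f(z)`, or
`B'(z) = 0` and `f'(z) = 0`. -/
theorem stmt3 {n : ℕ} (hn : 2 ≤ n) (a : Fin n → ℂ) (ha : ∀ j, a j ∈ uDisk)
    (ha0 : a ⟨0, by omega⟩ = 0)
    (f G : ℂ → ℂ) (hf : DifferentiableOn ℂ f uDisk) (hG : IsGamma a f G)
    (z : ℂ) (hz : z ∈ uDisk) :
    G z = 0 ↔
      (∃ z' ∈ uDisk, z' ≠ z ∧ blaschke a z' = blaschke a z ∧ f z' = f z) ∨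
      (deriv (blaschke a) z = 0 ∧ deriv f z = 0) := by
  have ha0 : ∃ j, a j = 0 := ⟨_, ha0⟩
  obtain ⟨v, hv, hGz⟩ := exists_fiber_prod_formula hn ha ha0 hf hG hz
  have hmem : ∀ w, w ∈ (fiberMS a z).erase z ↔ ∃ i, v i = w := fun w => by
    rw [← hv, Multiset.mem_map]
    simp
  rw [hGz, Finset.prod_eq_zero_iff, deriv_blaschke_eq_zero_iff ha hz,
    ← mem_erase_fiber_self_iff hn ha ha0 hz]
  constructor
  · rintro ⟨i, -, hi⟩
    have hvi := (hmem (v i)).2 ⟨i, rfl⟩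
    split_ifs at hi with h
    · rw [h] at hvi
      exact Or.inr ⟨hvi, hi⟩
    · obtain ⟨h1, h2⟩ := (mem_fiberMS hn ha ha0 hz).1 (Multiset.mem_of_mem_erase hvi)
      have h3 := (div_eq_zero_iff.1 hi).resolve_right (sub_ne_zero.2 (Ne.symm h))
      exact Or.inl ⟨v i, h1, h, h2, (sub_eq_zero.1 h3).symm⟩
  · rintro (⟨w, hw, hne, hB, hfw⟩ | ⟨hz', hf'⟩)
    · have hw' : w ∈ (fiberMS a z).erase z :=
        (Multiset.mem_erase_of_ne hne).2 ((mem_fiberMS hn ha ha0 hz).2 ⟨hw, hB⟩)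
      obtain ⟨i, rfl⟩ := (hmem w).1 hw'
      exact ⟨i, Finset.mem_univ i, by rw [if_neg hne, hfw, sub_self, zero_div]⟩
    · obtain ⟨i, hi⟩ := (hmem z).1 hz'
      exact ⟨i, Finset.mem_univ i, by rw [if_pos hi, hf']⟩
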